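/- arXiv:2202.04026 — 2 statements merged into one kernel-verified Lean document; each statement's English description precedes it below -/
import Mathlib

section
/- Let g : 𝕊ⁿ → ℝ be convex and let X* ∈ S_n be a minimizer of g over S_n with rank(X*) = r*. Then: (a) there exists at least one G* ∈ ∂g(X*) such that ⟨X − X*, G*⟩ ≥ 0 for all X ∈ S_n; and (b) every such subgradient G* satisfies G* v = λ_n(G*)·v for every eigenvector v of X* corresponding to a nonzero eigenvalue of X*; equivalently, the column space of X* is contained in the eigenspace of G* associated with its smallest eigenvalue λ_n(G*). -/
open scoped BigOperators RealInnerProductSpace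
open Matrix

noncomputable section

abbrev Mat (n : ℕ) := Matrix (Fin n) (Fin n) ℝ
abbrev Vec (m : ℕ) := EuclideanSpace ℝ (Fin m)

/-- Trace inner product `⟨A,B⟩ = Tr(AB)`. -/
def mip {n : ℕ} (A B : Mat n) : ℝ := (A * B).trace

/-- Frobenius norm. -/
def frob {n : ℕ} (A : Mat n) : ℝ := Real.sqrt (∑ i, ∑ j, (A i j) ^ 2)

/-- The set of symmetric `n × n` real matrices (the space `𝕊ⁿ`). -/
def SymM (n : ℕ) : Set (Mat n) := {X | X.IsSymm}

/-- The spectrahedron `S_n`. -/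
def Spectra (n : ℕ) : Set (Mat n) := {X | X.trace = 1 ∧ X.PosSemidef}

/-- `lam A k` : the `k`-th largest eigenvalue of a symmetric matrix `A` (1-indexed,
so `lam A 1 = λ₁(A)` is the largest and `lam A n = λₙ(A)` is the smallest);
junk value otherwise. -/
def lam {n : ℕ} (A : Mat n) (k : ℕ) : ℝ :=
  if h : k - 1 < n then
    if hA : A.IsHermitian then
      hA.eigenvalues (Tuple.sort hA.eigenvalues (Fin.rev ⟨k - 1, h⟩))
    else 0
  else 0

/-- Multiplicity of the smallest eigenvalue of `A`. -/
def multMin {n : ℕ} (A : Mat n) : ℕ :=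
  letI := Classical.decPred fun k : ℕ => lam A k = lam A n
  ((Finset.Icc 1 n).filter fun k => lam A k = lam A n).card

/-- Subdifferential of `g : 𝕊ⁿ → ℝ` at `X`. -/
def subdiff {n : ℕ} (g : Mat n → ℝ) (X : Mat n) : Set (Mat n) :=
  {G | G.IsSymm ∧ ∀ Y ∈ SymM n, g Y ≥ g X + mip G (Y - X)}

/-- Euclidean (Frobenius-norm) projection onto `C ⊆ 𝕊ⁿ`. -/
def mproj {n : ℕ} (C : Set (Mat n)) (X : Mat n) : Mat n :=
  Classical.epsilon fun P => P ∈ C ∧ ∀ Q ∈ C, frob (X - P) ≤ frob (X - Q)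

/-- Euclidean projection onto `C ⊆ ℝᵐ`. -/
def vproj {m : ℕ} (C : Set (Vec m)) (x : Vec m) : Vec m :=
  Classical.epsilon fun p => p ∈ C ∧ ∀ q ∈ C, ‖x - p‖ ≤ ‖x - q‖

/-- Norm on the product space `𝕊ⁿ × ℝᵐ`. -/
def pnorm {n m : ℕ} (X : Mat n) (y : Vec m) : ℝ := Real.sqrt (frob X ^ 2 + ‖y‖ ^ 2)

/-!
(a) On `S_n` the constant `g X*` lies below `g`, so Hahn–Banach separation of the strict epigraph
of `g` from `S_n × (-∞, g X*]` yields an affine function between the two. It agrees with `g` at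
`X*`, and its linear part is a subgradient which is nonnegative on `S_n - X*`.

(b) Testing optimality against `w wᵀ`, for `w` a unit eigenvector of `λₙ(G)`, gives
`Tr (G X*) ≤ λₙ(G)`, i.e. `Tr ((G - λₙ(G) I) X*) ≤ 0`. Both factors are positive semidefinite, so
their product vanishes and `G X* = λₙ(G) X*`.
-/

section Sandwich

open Set

variable {E : Type*} [TopologicalSpace E] [AddCommGroup E] [Module ℝ E]
  [IsTopologicalAddGroup E] [ContinuousSMul ℝ E] {φ ψ : E → ℝ} {C : Set E}

theorem exists_affine_between_of_concaveOn_le_convexOn (hφ : ConvexOn ℝ univ φ)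
    (hφc : Continuous φ) (hψ : ConcaveOn ℝ C ψ) (hC : C.Nonempty) (hle : ∀ y ∈ C, ψ y ≤ φ y) :
    ∃ (ℓ : StrongDual ℝ E) (b : ℝ), (∀ y, ℓ y + b ≤ φ y) ∧ ∀ y ∈ C, ψ y ≤ ℓ y + b := by
  have isOpen_epigraph : IsOpen {p : E × ℝ | p.1 ∈ univ ∧ φ p.1 < p.2} := by
    simpa using isOpen_lt (hφc.comp continuous_fst) continuous_snd
  have disjoint_graphs : Disjoint {p : E × ℝ | p.1 ∈ univ ∧ φ p.1 < p.2}
      {p : E × ℝ | p.1 ∈ C ∧ p.2 ≤ ψ p.1} :=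
    disjoint_left.2 fun p hp hp' => (hp'.2.trans (hle _ hp'.1)).not_gt hp.2
  obtain ⟨f, u, lt_of_epigraph, le_of_hypograph⟩ := geometric_hahn_banach_open
    hφ.convex_strict_epigraph isOpen_epigraph hψ.convex_hypograph disjoint_graphs
  set c := f (0, 1)
  have f_apply (y : E) (t : ℝ) : f (y, t) = f (y, 0) + t * c := by
    rw [← smul_eq_mul, ← map_smul, ← map_add]
    simp
  have f_lt (y : E) (t : ℝ) (hyt : φ y < t) : f (y, 0) + t * c < u :=
    f_apply y t ▸ lt_of_epigraph (y, t) ⟨mem_univ y, hyt⟩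
  have le_f (y : E) (hy : y ∈ C) : u ≤ f (y, 0) + ψ y * c :=
    f_apply y (ψ y) ▸ le_of_hypograph (y, ψ y) ⟨hy, le_rfl⟩
  have c_neg : c < 0 := by
    obtain ⟨y, hy⟩ := hC
    nlinarith [f_lt y (φ y + 1) (lt_add_one _), le_f y hy, hle y hy]
  refine ⟨(-c)⁻¹ • f.comp (.inl ℝ E ℝ), -((-c)⁻¹ * u), fun y => ?_, fun y hy => ?_⟩
  · refine le_of_forall_gt_imp_ge_of_dense fun t ht => ?_
    suffices (-c)⁻¹ * (f (y, 0) - u) ≤ t by simpa [mul_sub, ← sub_eq_add_neg] using this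
    rw [inv_mul_le_iff₀ (neg_pos.2 c_neg)]
    linarith [f_lt y t ht]
  · suffices ψ y ≤ (-c)⁻¹ * (f (y, 0) - u) by simpa [mul_sub, ← sub_eq_add_neg] using this
    rw [le_inv_mul_iff₀ (neg_pos.2 c_neg)]
    linarith [le_f y hy]

theorem exists_subgradient_nonneg_on_of_isMinOn {x : E} (hφ : ConvexOn ℝ univ φ)
    (hφc : Continuous φ) (hC : Convex ℝ C) (hx : x ∈ C) (hmin : IsMinOn φ C x) :
    ∃ ℓ : StrongDual ℝ E, (∀ y, φ x + ℓ (y - x) ≤ φ y) ∧ ∀ y ∈ C, 0 ≤ ℓ (y - x) := by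
  obtain ⟨ℓ, b, affine_le, le_affine⟩ := exists_affine_between_of_concaveOn_le_convexOn
    hφ hφc (concaveOn_const (φ x) hC) ⟨x, hx⟩ hmin
  have affine_eq : ℓ x + b = φ x := (affine_le x).antisymm (le_affine x hx)
  refine ⟨ℓ, fun y => ?_, fun y hy => ?_⟩
  · linarith [map_sub ℓ y x, affine_le y]
  · linarith [map_sub ℓ y x, le_affine y hy]

end Sandwich

section TraceDuality

variable {ι κ R : Type*} [Fintype ι] [Fintype κ] [CommSemiring R]

theorem trace_transpose_mul_of_isSymm (A : Matrix ι ι R) {B : Matrix ι ι R} (hB : B.IsSymm) :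
    (Aᵀ * B).trace = (A * B).trace := by
  rw [← trace_transpose, transpose_mul, transpose_transpose, hB.eq, trace_mul_comm]

theorem exists_trace_mul_eq (ℓ : Matrix ι κ R →ₗ[R] R) :
    ∃ A : Matrix κ ι R, ∀ B, (A * B).trace = ℓ B := by
  classical
  refine ⟨of fun i j => ℓ (single j i 1), fun B => ?_⟩
  have single_eq (i : ι) (j : κ) : single i j (B i j) = B i j • single i j (1 : R) := by
    rw [smul_single, smul_eq_mul, mul_one]
  conv_rhs => rw [matrix_eq_sum_single B]
  simp only [single_eq, map_sum, map_smul, smul_eq_mul, trace, diag_apply, mul_apply, of_apply]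
  rw [Finset.sum_comm]
  simp only [mul_comm]

theorem exists_isSymm_trace_mul_eq [Invertible (2 : R)] (ℓ : Matrix ι ι R →ₗ[R] R) :
    ∃ A : Matrix ι ι R, A.IsSymm ∧ ∀ B : Matrix ι ι R, B.IsSymm → (A * B).trace = ℓ B := by
  obtain ⟨A, hA⟩ := exists_trace_mul_eq ℓ
  refine ⟨⅟(2 : R) • (A + Aᵀ), (isSymm_add_transpose_self A).smul _, fun B hB => ?_⟩
  rw [smul_mul, trace_smul, add_mul, trace_add, trace_transpose_mul_of_isSymm A hB, hA,
    ← two_smul R, invOf_smul_smul]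

end TraceDuality

section Hermitian

open scoped MatrixOrder ComplexOrder

variable {ι 𝕜 : Type*} [Fintype ι] [RCLike 𝕜] {A B : Matrix ι ι 𝕜}

theorem posSemidef_sub_algebraMap_of_le_spectrum [DecidableEq ι] (hA : A.IsHermitian) {l : ℝ}
    (hl : ∀ x ∈ spectrum ℝ A, l ≤ x) : (A - algebraMap ℝ (Matrix ι ι 𝕜) l).PosSemidef :=
  Matrix.le_iff.1 ((algebraMap_le_iff_le_spectrum hA).2 hl)

theorem mul_eq_zero_of_trace_mul_nonpos (hA : A.PosSemidef) (hB : B.PosSemidef)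
    (htr : (A * B).trace ≤ 0) : A * B = 0 := by
  classical
  obtain ⟨S, rfl⟩ := CStarAlgebra.nonneg_iff_eq_star_mul_self.1 hA.nonneg
  obtain ⟨T, rfl⟩ := CStarAlgebra.nonneg_iff_eq_star_mul_self.1 hB.nonneg
  simp only [star_eq_conjTranspose] at htr ⊢
  have trace_eq : (Sᴴ * S * (Tᴴ * T)).trace = ((S * Tᴴ)ᴴ * (S * Tᴴ)).trace := by
    rw [conjTranspose_mul, conjTranspose_conjTranspose, ← Matrix.mul_assoc, trace_mul_comm]
    simp only [Matrix.mul_assoc]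
  have factor_mul_eq_zero : S * Tᴴ = 0 := trace_conjTranspose_mul_self_eq_zero_iff.1 <|
    (trace_eq ▸ htr).antisymm (posSemidef_conjTranspose_mul_self _).trace_nonneg
  rw [Matrix.mul_assoc, ← Matrix.mul_assoc S, factor_mul_eq_zero, Matrix.zero_mul,
    Matrix.mul_zero]

theorem exists_unit_mulVec_eq_smul_of_mem_spectrum [DecidableEq ι] (hA : A.IsHermitian) {l : ℝ}
    (hl : l ∈ spectrum ℝ A) : ∃ w : ι → 𝕜, star w ⬝ᵥ w = 1 ∧ A *ᵥ w = l • w := by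
  rw [hA.spectrum_real_eq_range_eigenvalues] at hl
  obtain ⟨i, rfl⟩ := hl
  refine ⟨hA.eigenvectorBasis i, ?_, hA.mulVec_eigenvectorBasis i⟩
  rw [dotProduct_comm, ← EuclideanSpace.inner_eq_star_dotProduct, inner_self_eq_norm_sq_to_K,
    hA.eigenvectorBasis.orthonormal.1 i, RCLike.ofReal_one, one_pow]

end Hermitian

theorem mulVec_eq_smul_of_mul_eq_smul {ι K : Type*} [Fintype ι] [Field K] {A B : Matrix ι ι K}
    {l μ : K} {v : ι → K} (hAB : A * B = l • B) (hμ : μ ≠ 0) (hv : B *ᵥ v = μ • v) :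
    A *ᵥ v = l • v := by
  refine smul_right_injective _ hμ ?_
  calc μ • A *ᵥ v = (A * B) *ᵥ v := by rw [← mulVec_mulVec, hv, mulVec_smul]
    _ = μ • l • v := by rw [hAB, smul_mulVec, hv, smul_comm]

section Spectrahedron

variable {n : ℕ}

theorem isLeast_spectrum_lam (hn : 0 < n) {A : Mat n} (hA : A.IsHermitian) :
    IsLeast (spectrum ℝ A) (lam A n) := by
  have pred_lt : n - 1 < n := Nat.sub_one_lt_of_lt hn
  rw [hA.spectrum_real_eq_range_eigenvalues, lam, dif_pos pred_lt, dif_pos hA]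
  refine ⟨Set.mem_range_self _, Set.forall_mem_range.2 fun j => ?_⟩
  have first_le : Fin.rev ⟨n - 1, pred_lt⟩ ≤ (Tuple.sort hA.eigenvalues).symm j := by
    rw [Fin.le_def, Fin.val_rev]
    dsimp only
    omega
  simpa using Tuple.monotone_sort hA.eigenvalues first_le

theorem convex_spectra : Convex ℝ (Spectra n) := by
  intro X hX Y hY a b ha hb hab
  refine ⟨?_, (hX.2.smul ha).add (hY.2.smul hb)⟩
  rw [trace_add, trace_smul, trace_smul, hX.1, hY.1, smul_eq_mul, smul_eq_mul, mul_one, mul_one,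
    hab]

theorem spectra_subset_symM : Spectra n ⊆ SymM n :=
  fun _ hX => isHermitian_iff_isSymm.1 hX.2.isHermitian

theorem vecMulVec_self_mem_spectra {w : Fin n → ℝ} (hw : w ⬝ᵥ w = 1) :
    vecMulVec w w ∈ Spectra n :=
  ⟨by rw [trace_vecMulVec, hw], by simpa using posSemidef_vecMulVec_self_star w⟩

open scoped Norms.Elementwise in
theorem exists_mem_subdiff_mip_sub_nonneg {g : Mat n → ℝ} (hg : ConvexOn ℝ (SymM n) g)
    {C : Set (Mat n)} (hC : Convex ℝ C) (hCsymm : C ⊆ SymM n) {X : Mat n} (hX : X ∈ C)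
    (hmin : IsMinOn g C X) :
    ∃ G ∈ subdiff g X, ∀ Y ∈ C, 0 ≤ mip (Y - X) G := by
  -- Symmetrization extends `g` to a convex function on all matrices, which is thus continuous.
  let sym : Mat n →ₗ[ℝ] Mat n :=
    (selfAdjoint.submodule ℝ (Mat n)).subtype ∘ₗ selfAdjointPart ℝ
  have sym_mem (A : Mat n) : sym A ∈ SymM n :=
    isHermitian_iff_isSymm.1 (selfAdjointPart ℝ A).2
  have sym_eq_self {A : Mat n} (hA : A ∈ SymM n) : sym A = A :=
    (isHermitian_iff_isSymm.2 hA).isSelfAdjoint.coe_selfAdjointPart_apply ℝ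
  have convexOn_sym : ConvexOn ℝ Set.univ (g ∘ sym) :=
    (hg.comp_linearMap sym).subset (fun A _ => sym_mem A) convex_univ
  have isMinOn_sym : IsMinOn (g ∘ sym) C X := fun Y hY => by
    simpa [sym_eq_self (hCsymm hX), sym_eq_self (hCsymm hY)] using hmin hY
  obtain ⟨ℓ, subgradient, nonneg_on⟩ := exists_subgradient_nonneg_on_of_isMinOn convexOn_sym
    convexOn_sym.locallyLipschitz.continuous hC hX isMinOn_sym
  obtain ⟨G, hGsymm, hG⟩ := exists_isSymm_trace_mul_eq (ℓ : Mat n →ₗ[ℝ] ℝ)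
  have mip_sub_eq {Y : Mat n} (hY : Y ∈ SymM n) : mip G (Y - X) = ℓ (Y - X) :=
    hG (Y - X) (hY.sub (hCsymm hX))
  refine ⟨G, ⟨hGsymm, fun Y hY => ?_⟩, fun Y hY => ?_⟩
  · simpa [mip_sub_eq hY, sym_eq_self hY, sym_eq_self (hCsymm hX)] using subgradient Y
  · rw [mip, trace_mul_comm]
    exact (nonneg_on Y hY).trans_eq (mip_sub_eq (hCsymm hY)).symm

variable {G X : Mat n}

theorem mip_le_of_mem_spectrum (hG : G.IsHermitian)
    (hopt : ∀ Y ∈ Spectra n, 0 ≤ mip (Y - X) G) {l : ℝ} (hl : l ∈ spectrum ℝ G) :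
    mip X G ≤ l := by
  obtain ⟨w, hw, hGw⟩ := exists_unit_mulVec_eq_smul_of_mem_spectrum hG hl
  rw [star_trivial] at hw
  have mip_rank_one : mip (vecMulVec w w) G = l := by
    rw [mip, trace_mul_comm, mul_vecMulVec, hGw, trace_vecMulVec, smul_dotProduct, hw,
      smul_eq_mul, mul_one]
  have rank_one_test := hopt _ (vecMulVec_self_mem_spectra hw)
  rwa [mip, sub_mul, trace_sub, ← mip, ← mip, mip_rank_one, sub_nonneg] at rank_one_test

theorem pos_of_mem_spectra (hX : X ∈ Spectra n) : 0 < n := by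
  refine Nat.pos_of_ne_zero ?_
  rintro rfl
  simpa using hX.1

theorem mul_eq_lam_smul_of_mip_sub_nonneg (hG : G.IsHermitian) (hX : X ∈ Spectra n)
    (hopt : ∀ Y ∈ Spectra n, 0 ≤ mip (Y - X) G) : G * X = lam G n • X := by
  have isLeast_lam := isLeast_spectrum_lam (pos_of_mem_spectra hX) hG
  have sub_mul_eq : (G - algebraMap ℝ (Mat n) (lam G n)) * X = G * X - lam G n • X := by
    rw [sub_mul, Algebra.algebraMap_eq_smul_one, smul_mul_assoc, one_mul]
  have trace_nonpos : ((G - algebraMap ℝ (Mat n) (lam G n)) * X).trace ≤ 0 := by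
    rw [sub_mul_eq, trace_sub, trace_smul, hX.1, smul_eq_mul, mul_one, sub_nonpos,
      trace_mul_comm]
    exact mip_le_of_mem_spectrum hG hopt isLeast_lam.1
  have shift_mul_eq_zero := mul_eq_zero_of_trace_mul_nonpos
    (posSemidef_sub_algebraMap_of_le_spectrum hG isLeast_lam.2) hX.2 trace_nonpos
  exact sub_eq_zero.1 (sub_mul_eq ▸ shift_mul_eq_zero)

end Spectrahedron

theorem stmt_1 {n : ℕ} (hn : 2 ≤ n) (g : Mat n → ℝ)
    (hg : ConvexOn ℝ (SymM n) g)
    (Xs : Mat n) (hXsS : Xs ∈ Spectra n)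
    (hmin : ∀ X ∈ Spectra n, g Xs ≤ g X)
    (rs : ℕ) (hrank : Xs.rank = rs) :
    (∃ G ∈ subdiff g Xs, ∀ X ∈ Spectra n, mip (X - Xs) G ≥ 0) ∧
    (∀ G ∈ subdiff g Xs, (∀ X ∈ Spectra n, mip (X - Xs) G ≥ 0) →
      ∀ (v : Fin n → ℝ) (μ : ℝ), v ≠ 0 → μ ≠ 0 → Xs.mulVec v = μ • v →
        G.mulVec v = lam G n • v) := by
  refine ⟨exists_mem_subdiff_mip_sub_nonneg hg convex_spectra spectra_subset_symM hXsS hmin, ?_⟩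
  intro G hG hopt v μ _ hμ hv
  have hGX : G * Xs = lam G n • Xs :=
    mul_eq_lam_smul_of_mip_sub_nonneg (isHermitian_iff_isSymm.2 hG.1) hXsS hopt
  exact mulVec_eq_smul_of_mul_eq_smul hGX hμ hv
end
end

section
/- Let g : 𝕊ⁿ → ℝ be convex, let X* ∈ S_n be a minimizer of g over S_n with rank(X*) = r* < n, and let G* ∈ ∂g(X*) satisfy ⟨X − X*, G*⟩ ≥ 0 for all X ∈ S_n. Fix any η > 0. Then λ_{n−r*}(G*) = λ_n(G*) if and only if for every ζ > 0 it holds that rank( Π_{(1+ζ)S_n}[ X* − η G* ] ) > r*, where (1+ζ)S_n = {X ∈ 𝕊ⁿ : Tr(X) = 1+ζ, X ⪰ 0} and Π_{(1+ζ)S_n} denotes Euclidean (Frobenius-norm) projection onto this set. -/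
open scoped BigOperators RealInnerProductSpace
open Matrix

noncomputable section

/-!
Write `μ = λₙ(G)` and `N = G - μ I ⪰ 0`. The first-order condition says that `X` minimizes
`⟨·, G⟩` over the spectrahedron, which forces `N X = 0`, and `λ_{n-r}(G) = μ` says that
`rank N + r < n`. By the same optimality criterion, `P` is the projection of `Y = X - η G` onto
the trace-`t` slice exactly when `S = P - Y - ν I` is positive semidefinite with `S P = 0` for
some real `ν`.

If `rank N + r < n` and `rank P ≤ r`, a common kernel vector of `N` and `P` shows `ν ≤ η μ`, so
`S = P - X + H` with `H ⪰ 0`. With `L` the orthogonal projection onto the kernel of `P`, taking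
traces in `S = S L` gives `tr X - tr P = tr (X L) + tr (H (I - L)) ≥ 0`, impossible for `t > 1`.

If instead `n ≤ rank N + r` and `δ` is the spectral gap of `N` at `0`, then the projection for a
suitable `t > 1` is `X + η δ K`, where `K` is the orthogonal projection onto the kernel of `N`; its
range lies in that kernel, so its rank is at most `r`.
-/

open scoped Topology

section PosSemidef

open scoped ComplexOrder MatrixOrder

variable {ι 𝕜 : Type*} [Fintype ι] [RCLike 𝕜]

theorem posSemidef_trace_mul_nonneg {A B : Matrix ι ι 𝕜} (hA : A.PosSemidef) (hB : B.PosSemidef) :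
    0 ≤ (A * B).trace := by
  classical
  obtain ⟨C, rfl⟩ := CStarAlgebra.nonneg_iff_eq_star_mul_self.mp hB.nonneg
  rw [← Matrix.mul_assoc, trace_mul_comm, ← Matrix.mul_assoc]
  exact (hA.mul_mul_conjTranspose_same C).trace_nonneg

theorem posSemidef_trace_mul_eq_zero_iff {A B : Matrix ι ι 𝕜} (hA : A.PosSemidef)
    (hB : B.PosSemidef) : (A * B).trace = 0 ↔ A * B = 0 := by
  classical
  refine ⟨fun h => ?_, fun h => by rw [h, trace_zero]⟩
  obtain ⟨C, rfl⟩ := CStarAlgebra.nonneg_iff_eq_star_mul_self.mp hA.nonneg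
  obtain ⟨D, rfl⟩ := CStarAlgebra.nonneg_iff_eq_star_mul_self.mp hB.nonneg
  simp only [star_eq_conjTranspose] at h ⊢
  have hCD : C * Dᴴ = 0 := by
    rw [← trace_conjTranspose_mul_self_eq_zero_iff, ← h, conjTranspose_mul,
      conjTranspose_conjTranspose, Matrix.mul_assoc, trace_mul_comm D]
    simp only [Matrix.mul_assoc]
  rw [Matrix.mul_assoc, ← Matrix.mul_assoc C, hCD, Matrix.zero_mul, Matrix.mul_zero]

end PosSemidef

section KernelProjection

open scoped ComplexOrder MatrixOrder

variable {ι 𝕜 : Type*} [Fintype ι] [DecidableEq ι] [RCLike 𝕜] {N : Matrix ι ι 𝕜}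

/-- The orthogonal projection onto the kernel of a Hermitian matrix, obtained by applying the
indicator function of `{0}` to it. For a matrix that is not Hermitian it is the junk value `0`. -/
def kerProj (N : Matrix ι ι 𝕜) : Matrix ι ι 𝕜 := cfc (fun x : ℝ => if x = 0 then 1 else 0) N

theorem continuousOn_spectrum_real (N : Matrix ι ι 𝕜) (f : ℝ → ℝ) :
    ContinuousOn f (spectrum ℝ N) :=
  N.finite_real_spectrum.continuousOn f

theorem posSemidef_kerProj (N : Matrix ι ι 𝕜) : (kerProj N).PosSemidef := by
  refine nonneg_iff_posSemidef.mp (cfc_nonneg fun x _ => ?_)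
  positivity

theorem mul_kerProj (hN : N.IsHermitian) : N * kerProj N = 0 := by
  have hcfc := cfc_mul (fun x : ℝ => x) (fun x => if x = 0 then 1 else 0) N
    (continuousOn_spectrum_real N _) (continuousOn_spectrum_real N _)
  rw [cfc_id' ℝ N hN.isSelfAdjoint] at hcfc
  rw [kerProj, ← hcfc, ← cfc_zero ℝ N]
  congr! 2 with x
  simp

theorem one_sub_kerProj (hN : N.IsHermitian) :
    1 - kerProj N = cfc (fun x : ℝ => if x = 0 then 0 else 1) N := by
  rw [kerProj, ← cfc_one ℝ N hN.isSelfAdjoint, ← cfc_sub _ _ N (continuousOn_spectrum_real N _)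
    (continuousOn_spectrum_real N _)]
  congr! 2 with _
  split_ifs <;> simp

theorem posSemidef_one_sub_kerProj (hN : N.IsHermitian) : (1 - kerProj N).PosSemidef := by
  rw [one_sub_kerProj hN]
  refine nonneg_iff_posSemidef.mp (cfc_nonneg fun x _ => ?_)
  positivity

-- Since `0⁻¹ = 0`, the function `x⁻¹` turns `N` into its pseudo-inverse.
theorem one_sub_kerProj_eq_mul_cfc_inv (hN : N.IsHermitian) :
    1 - kerProj N = N * cfc (fun x : ℝ => x⁻¹) N := by
  have hcfc := cfc_mul (fun x : ℝ => x) (fun x => x⁻¹) N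
    (continuousOn_spectrum_real N _) (continuousOn_spectrum_real N _)
  rw [cfc_id' ℝ N hN.isSelfAdjoint] at hcfc
  rw [one_sub_kerProj hN, ← hcfc]
  congr! 2 with x
  split_ifs with hx <;> simp [hx]

theorem mul_kerProj_eq_self (hN : N.IsHermitian) {S : Matrix ι ι 𝕜} (hSN : S * N = 0) :
    S * kerProj N = S := by
  have hS : S * (1 - kerProj N) = 0 := by
    rw [one_sub_kerProj_eq_mul_cfc_inv hN, ← Matrix.mul_assoc, hSN, Matrix.zero_mul]
  rw [Matrix.mul_sub, Matrix.mul_one, sub_eq_zero] at hS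
  exact hS.symm

theorem kerProj_mul_eq_self (hN : N.IsHermitian) {X : Matrix ι ι 𝕜} (hNX : N * X = 0) :
    kerProj N * X = X := by
  have hXN : Xᴴ * N = 0 := by
    simpa only [conjTranspose_mul, hN.eq, conjTranspose_zero] using congrArg conjTranspose hNX
  simpa only [conjTranspose_mul, conjTranspose_conjTranspose, (posSemidef_kerProj N).isHermitian.eq]
    using congrArg conjTranspose (mul_kerProj_eq_self hN hXN)

theorem exists_pos_posSemidef_sub_smul_one_sub_kerProj (hN : N.PosSemidef) :
    ∃ δ : ℝ, 0 < δ ∧ (N - δ • (1 - kerProj N)).PosSemidef := by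
  obtain ⟨δ, hδ, hgap⟩ : ∃ δ : ℝ, 0 < δ ∧ ∀ x ∈ spectrum ℝ N, x ≠ 0 → δ ≤ x := by
    have hfin : (spectrum ℝ N \ {0}).Finite := N.finite_real_spectrum.sdiff
    have hpos : ∀ x ∈ spectrum ℝ N \ {0}, ∀ᶠ δ in 𝓝[>] (0 : ℝ), δ ≤ x := fun x hx => by
      have hx0 : 0 ≤ x := spectrum_nonneg_of_nonneg hN.nonneg hx.1
      filter_upwards [Ioo_mem_nhdsGT (hx0.lt_of_ne' hx.2)] with δ hδ using hδ.2.le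
    obtain ⟨δ, hle, hδ⟩ := (((Filter.eventually_all_finite hfin).mpr hpos).and
      self_mem_nhdsWithin).exists
    exact ⟨δ, hδ, fun x hx hx0 => hle x ⟨hx, hx0⟩⟩
  refine ⟨δ, hδ, ?_⟩
  have hcfc : N - δ • (1 - kerProj N) = cfc (fun x : ℝ => x - δ * if x = 0 then 0 else 1) N := by
    rw [cfc_sub _ _ N (continuousOn_spectrum_real N _) (continuousOn_spectrum_real N _),
      cfc_const_mul _ _ N (continuousOn_spectrum_real N _),
      cfc_id' ℝ N hN.isHermitian.isSelfAdjoint,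
      one_sub_kerProj hN.isHermitian]
  rw [hcfc]
  refine nonneg_iff_posSemidef.mp (cfc_nonneg fun x hx => ?_)
  by_cases hx0 : x = 0
  · simp [hx0]
  · simpa [hx0] using hgap x hx hx0

end KernelProjection

open scoped ComplexOrder in
theorem trace_le_trace_of_sub_add_mul_eq_zero {ι 𝕜 : Type*} [Fintype ι] [RCLike 𝕜]
    {P X H : Matrix ι ι 𝕜} (hP : P.IsHermitian) (hX : X.PosSemidef) (hH : H.PosSemidef)
    (h : (P - X + H) * P = 0) : P.trace ≤ X.trace := by
  classical
  set K := kerProj P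
  have hPK : P * K = 0 := mul_kerProj hP
  have hK : (P - X + H) * K = P - X + H := mul_kerProj_eq_self hP h
  have htr : X.trace - P.trace = (X * K).trace + (H * (1 - K)).trace := by
    have := congrArg trace hK
    simp only [Matrix.add_mul, Matrix.sub_mul, Matrix.mul_sub, Matrix.mul_one, hPK, trace_add,
      trace_sub, trace_zero] at this ⊢
    linear_combination this
  have hXK := posSemidef_trace_mul_nonneg hX (posSemidef_kerProj P)
  have hHK := posSemidef_trace_mul_nonneg hH (posSemidef_one_sub_kerProj hP)
  exact sub_nonneg.mp (htr ▸ add_nonneg hXK hHK)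

section ShiftedMatrix

open scoped ComplexOrder MatrixOrder

variable {ι 𝕜 : Type*} [DecidableEq ι] [RCLike 𝕜] {A : Matrix ι ι 𝕜} {μ : ℝ}

theorem isHermitian_of_posSemidef_sub_smul_one (hμ : (A - μ • (1 : Matrix ι ι 𝕜)).PosSemidef) :
    A.IsHermitian := by
  simpa only [sub_add_cancel] using hμ.isHermitian.add (isHermitian_one.smul (.all μ))

variable [Fintype ι]

theorem rank_sub_smul_one (hA : A.IsHermitian) (μ : ℝ) :
    (A - μ • (1 : Matrix ι ι 𝕜)).rank = Fintype.card {i // hA.eigenvalues i ≠ μ} := by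
  have hcfc : A - μ • (1 : Matrix ι ι 𝕜) = hA.cfc (fun x => x - μ) := by
    rw [← hA.cfc_eq, cfc_sub _ _ A, cfc_id' ℝ A hA.isSelfAdjoint, cfc_const μ A hA.isSelfAdjoint,
      Algebra.algebraMap_eq_smul_one]
  rw [hcfc, IsHermitian.cfc, Unitary.conjStarAlgAut_apply, ← Unitary.coe_star,
    rank_mul_eq_left_of_isUnit_det _ _ (UnitaryGroup.det_isUnit _),
    rank_mul_eq_right_of_isUnit_det _ _ (UnitaryGroup.det_isUnit _), rank_diagonal]
  simp [sub_eq_zero]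

theorem le_eigenvalues_of_posSemidef_sub_smul_one (hA : A.IsHermitian)
    (hμ : (A - μ • (1 : Matrix ι ι 𝕜)).PosSemidef) (i : ι) : μ ≤ hA.eigenvalues i := by
  rw [← Algebra.algebraMap_eq_smul_one, ← nonneg_iff_posSemidef, sub_nonneg,
    algebraMap_le_iff_le_spectrum (ha := hA.isSelfAdjoint)] at hμ
  exact hμ _ (hA.eigenvalues_mem_spectrum_real i)

end ShiftedMatrix

theorem exists_ne_zero_mulVec_eq_zero_of_rank_add_rank_lt {K l m ι : Type*} [Field K]
    [Fintype ι] {A : Matrix l ι K} {B : Matrix m ι K}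
    (h : A.rank + B.rank < Fintype.card ι) : ∃ u ≠ 0, A *ᵥ u = 0 ∧ B *ᵥ u = 0 := by
  have hA := A.mulVecLin.finrank_range_add_finrank_ker
  have hB := B.mulVecLin.finrank_range_add_finrank_ker
  rw [Module.finrank_fintype_fun_eq_card] at hA hB
  have hker : ¬ Disjoint (LinearMap.ker A.mulVecLin) (LinearMap.ker B.mulVecLin) := fun hdisj => by
    have hle := Submodule.finrank_add_finrank_le_of_disjoint hdisj
    rw [Module.finrank_fintype_fun_eq_card] at hle
    simp only [Matrix.rank] at h
    omega
  rw [disjoint_iff] at hker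
  obtain ⟨u, ⟨hAu, hBu⟩, hu⟩ := Submodule.exists_mem_ne_zero_of_ne_bot hker
  exact ⟨u, hu, hAu, hBu⟩

theorem rank_lt_card_of_mul_eq_zero {K l m o : Type*} [Field K] [Finite l] [Fintype m] [Finite o]
    {A : Matrix l m K} {B : Matrix m o K} (hAB : A * B = 0) (hB : B ≠ 0) :
    A.rank < Fintype.card m := by
  classical
  cases nonempty_fintype o
  have hrank : B.rank ≠ 0 := by
    rwa [Matrix.rank, Ne, Submodule.finrank_eq_zero, LinearMap.range_eq_bot, ← toLin'_apply',
      map_eq_zero_iff _ toLin'.injective]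
  have := rank_add_rank_le_card_of_mul_eq_zero hAB
  omega

section LinearMinimization

variable {ι : Type*} [Fintype ι]

/-- The spectrahedron of trace `t`, i.e. `t • S_n` for `t ≥ 0`: the feasible set of the linear
minimization and projection problems below. `Spectra n` is `scaledSpectra (Fin n) 1`. -/
def scaledSpectra (ι : Type*) [Fintype ι] (t : ℝ) : Set (Matrix ι ι ℝ) :=
  {X | X.trace = t ∧ X.PosSemidef}

theorem convex_scaledSpectra (t : ℝ) : Convex ℝ (scaledSpectra ι t) := by
  rintro X ⟨hXt, hX⟩ Y ⟨hYt, hY⟩ a b ha hb hab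
  refine ⟨?_, (hX.smul ha).add (hY.smul hb)⟩
  rw [trace_add, trace_smul, trace_smul, hXt, hYt, ← add_smul, hab, one_smul]

theorem isClosed_scaledSpectra (t : ℝ) : IsClosed (scaledSpectra ι t) := by
  have hquad : scaledSpectra ι t =
      {X | X.trace = t} ∩ ({X | Xᴴ = X} ∩ ⋂ v : ι → ℝ, {X | 0 ≤ star v ⬝ᵥ X *ᵥ v}) := by
    ext X
    simp only [scaledSpectra, posSemidef_iff_dotProduct_mulVec, IsHermitian, Set.mem_inter_iff,
      Set.mem_ofPred_eq, Set.mem_iInter]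
  rw [hquad]
  refine (isClosed_eq (by fun_prop) continuous_const).inter ((isClosed_eq (by fun_prop)
    continuous_id).inter (isClosed_iInter fun v => isClosed_le continuous_const ?_))
  exact continuous_const.dotProduct (continuous_id.matrix_mulVec continuous_const)

theorem smul_mem_scaledSpectra {X : Matrix ι ι ℝ} {s a : ℝ} (hX : X ∈ scaledSpectra ι s)
    (ha : 0 ≤ a) : a • X ∈ scaledSpectra ι (a * s) :=
  ⟨by rw [trace_smul, hX.1, smul_eq_mul], hX.2.smul ha⟩

theorem vecMulVec_self_mem_scaledSpectra (v : ι → ℝ) :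
    vecMulVec v v ∈ scaledSpectra ι (v ⬝ᵥ v) :=
  ⟨trace_vecMulVec v v, by simpa only [star_trivial] using posSemidef_vecMulVec_self_star v⟩

theorem trace_vecMulVec_self_mul (v : ι → ℝ) (M : Matrix ι ι ℝ) :
    (vecMulVec v v * M).trace = v ⬝ᵥ M *ᵥ v := by
  rw [trace_mul_comm, mul_vecMulVec, trace_vecMulVec, dotProduct_comm]

theorem scaledSpectra_nonempty [Nonempty ι] {t : ℝ} (ht : 0 ≤ t) :
    (scaledSpectra ι t).Nonempty := by
  classical
  obtain ⟨i⟩ := ‹Nonempty ι›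
  have hmem := smul_mem_scaledSpectra (vecMulVec_self_mem_scaledSpectra (Pi.single i (1 : ℝ))) ht
  rw [single_dotProduct, Pi.single_eq_same, mul_one, mul_one] at hmem
  exact ⟨_, hmem⟩

variable [DecidableEq ι]

theorem trace_mul_sub_smul_one {M Q : Matrix ι ι ℝ} {t : ℝ} (hQ : Q.trace = t) (ν : ℝ) :
    (Q * (M - ν • 1)).trace = (Q * M).trace - ν * t := by
  rw [Matrix.mul_sub, Matrix.mul_smul, Matrix.mul_one, trace_sub, trace_smul, hQ, smul_eq_mul]

theorem posSemidef_sub_smul_one_of_isMinOn {M P : Matrix ι ι ℝ} {t : ℝ} (hM : M.IsHermitian)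
    (ht : 0 < t) (hmin : IsMinOn (fun Q => (Q * M).trace) (scaledSpectra ι t) P) :
    (M - ((P * M).trace / t) • 1).PosSemidef := by
  refine .of_dotProduct_mulVec_nonneg (hM.sub (isHermitian_one.smul (.all _))) fun v => ?_
  rcases eq_or_ne v 0 with rfl | hv
  · simp
  have hvv : 0 < v ⬝ᵥ v := dotProduct_star_self_pos_iff.mpr hv
  have hmem := smul_mem_scaledSpectra (vecMulVec_self_mem_scaledSpectra v) (div_pos ht hvv).le
  rw [div_mul_cancel₀ _ hvv.ne'] at hmem
  have hle : (P * M).trace ≤ t / (v ⬝ᵥ v) * (v ⬝ᵥ M *ᵥ v) := by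
    simpa only [Matrix.smul_mul, trace_smul, trace_vecMulVec_self_mul, smul_eq_mul]
      using isMinOn_iff.mp hmin _ hmem
  have hquad : (P * M).trace / t * (v ⬝ᵥ v) ≤ v ⬝ᵥ M *ᵥ v := by
    field_simp at hle ⊢
    linarith
  simpa [sub_mulVec, smul_mulVec, dotProduct_sub, dotProduct_smul] using hquad

theorem isMinOn_trace_mul_scaledSpectra_iff {M P : Matrix ι ι ℝ} {t : ℝ} (hM : M.IsHermitian)
    (ht : 0 < t) (hP : P ∈ scaledSpectra ι t) :
    IsMinOn (fun Q => (Q * M).trace) (scaledSpectra ι t) P ↔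
      ∃ ν : ℝ, (M - ν • 1).PosSemidef ∧ (M - ν • 1) * P = 0 := by
  constructor
  · intro hmin
    have hS := posSemidef_sub_smul_one_of_isMinOn hM ht hmin
    refine ⟨_, hS, (posSemidef_trace_mul_eq_zero_iff hS hP.2).mp ?_⟩
    rw [trace_mul_comm, trace_mul_sub_smul_one hP.1, div_mul_cancel₀ _ ht.ne', sub_self]
  · rintro ⟨ν, hS, hSP⟩ Q hQ
    have hQS := posSemidef_trace_mul_nonneg hQ.2 hS
    have hPS : (P * (M - ν • 1)).trace = 0 := by rw [trace_mul_comm, hSP, trace_zero]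
    rw [trace_mul_sub_smul_one hQ.1] at hQS
    rw [trace_mul_sub_smul_one hP.1] at hPS
    change (P * M).trace ≤ (Q * M).trace
    linarith

end LinearMinimization

section FrobeniusProjection

attribute [local instance] Matrix.frobeniusNormedAddCommGroup Matrix.frobeniusNormedSpace

/-- The trace inner product on real matrices, compatible with the Frobenius norm, so that
projections onto convex sets are governed by the variational inequality of inner product spaces.
The transpose makes it positive definite on all matrices; it is invisible on symmetric ones. -/
abbrev frobeniusInnerProductSpace (m n : Type*) [Fintype m] [Fintype n] :
    InnerProductSpace ℝ (Matrix m n ℝ) where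
  inner A B := (Aᵀ * B).trace
  norm_sq_eq_re_inner A := by
    simp_rw [frobenius_norm_def, ← Real.sqrt_eq_rpow, Real.rpow_two, Real.norm_eq_abs, sq_abs]
    rw [Real.sq_sqrt (by positivity), Finset.sum_comm]
    simp [trace, mul_apply, sq]
  conj_inner_symm A B := by
    rw [conj_trivial, ← trace_transpose, transpose_mul, transpose_transpose]
  add_left A B C := by rw [transpose_add, Matrix.add_mul, trace_add]
  smul_left A B r := by rw [transpose_smul, Matrix.smul_mul, trace_smul, conj_trivial, smul_eq_mul]

attribute [local instance] frobeniusInnerProductSpace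

theorem frobenius_inner_eq_trace {m n : Type*} [Fintype m] [Fintype n] (A B : Matrix m n ℝ) :
    ⟪A, B⟫ = (Aᵀ * B).trace :=
  rfl

theorem frob_eq_norm {n : ℕ} (A : Mat n) : frob A = ‖A‖ := by
  simp_rw [frob, frobenius_norm_def, ← Real.sqrt_eq_rpow, Real.rpow_two, Real.norm_eq_abs, sq_abs]

theorem norm_sub_eq_iInf_iff_forall_le {E : Type*} [SeminormedAddCommGroup E] {C : Set E} {x p : E}
    (hp : p ∈ C) : (‖x - p‖ = ⨅ q : C, ‖x - q‖) ↔ ∀ q ∈ C, ‖x - p‖ ≤ ‖x - q‖ := by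
  have : Nonempty C := ⟨p, hp⟩
  have hbdd : BddBelow (Set.range fun q : C => ‖x - q‖) :=
    ⟨0, Set.forall_mem_range.mpr fun q => norm_nonneg _⟩
  refine ⟨fun h q hq => h ▸ ciInf_le hbdd ⟨q, hq⟩, fun h => le_antisymm ?_ (ciInf_le hbdd ⟨p, hp⟩)⟩
  exact le_ciInf fun q => h q q.2

theorem eq_of_forall_inner_sub_nonpos {E : Type*} [NormedAddCommGroup E] [InnerProductSpace ℝ E]
    {C : Set E} {x p q : E} (hp : p ∈ C) (hq : q ∈ C) (hxp : ∀ w ∈ C, ⟪x - p, w - p⟫ ≤ 0)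
    (hxq : ∀ w ∈ C, ⟪x - q, w - q⟫ ≤ 0) : p = q := by
  have hsum : ⟪q - p, q - p⟫ = ⟪x - p, q - p⟫ + ⟪x - q, p - q⟫ := by
    rw [← neg_sub q p, inner_neg_right, ← sub_eq_add_neg, ← inner_sub_left, sub_sub_sub_cancel_left]
  have hle : ⟪q - p, q - p⟫ ≤ 0 := hsum ▸ add_nonpos (hxp q hq) (hxq p hp)
  exact (sub_eq_zero.mp (real_inner_self_nonpos.mp hle)).symm

theorem mproj_eq_iff {n : ℕ} {C : Set (Mat n)} (hne : C.Nonempty) (hclosed : IsClosed C)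
    (hconv : Convex ℝ C) {Y P : Mat n} :
    mproj C Y = P ↔ P ∈ C ∧ ∀ Q ∈ C, ⟪Y - P, Q - P⟫ ≤ 0 := by
  have hiff (R : Mat n) : (R ∈ C ∧ ∀ Q ∈ C, frob (Y - R) ≤ frob (Y - Q)) ↔
      R ∈ C ∧ ∀ Q ∈ C, ⟪Y - R, Q - R⟫ ≤ 0 :=
    and_congr_right fun hR => by
      simp only [frob_eq_norm, ← norm_sub_eq_iInf_iff_forall_le hR,
        norm_eq_iInf_iff_real_inner_le_zero hconv hR]
  obtain ⟨R, hR, hmin⟩ :=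
    exists_norm_eq_iInf_of_complete_convex hne hclosed.isComplete hconv Y
  have hproj := (hiff _).mp <| Classical.epsilon_spec (p := fun R => R ∈ C ∧
    ∀ Q ∈ C, frob (Y - R) ≤ frob (Y - Q))
    ⟨R, (hiff R).mpr ⟨hR, (norm_eq_iInf_iff_real_inner_le_zero hconv hR).mp hmin⟩⟩
  change mproj C Y ∈ C ∧ ∀ Q ∈ C, ⟪Y - mproj C Y, Q - mproj C Y⟫ ≤ 0 at hproj
  exact ⟨fun h => h ▸ hproj,
    fun hP => eq_of_forall_inner_sub_nonpos hproj.1 hP.1 hproj.2 hP.2⟩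

theorem mproj_scaledSpectra_eq_iff {n : ℕ} {Y P : Mat n} {t : ℝ} (hY : Y.IsHermitian)
    (ht : 0 < t) (hne : (scaledSpectra (Fin n) t).Nonempty) :
    mproj (scaledSpectra (Fin n) t) Y = P ↔ P ∈ scaledSpectra (Fin n) t ∧
      ∃ ν : ℝ, (P - Y - ν • 1).PosSemidef ∧ (P - Y - ν • 1) * P = 0 := by
  rw [mproj_eq_iff hne (isClosed_scaledSpectra t) (convex_scaledSpectra t)]
  refine and_congr_right fun hP => ?_
  have hM : (P - Y).IsHermitian := hP.2.isHermitian.sub hY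
  have hinner (Q : Mat n) : ⟪Y - P, Q - P⟫ = (P * (P - Y)).trace - (Q * (P - Y)).trace := by
    rw [← neg_sub P Y, inner_neg_left, frobenius_inner_eq_trace,
      ← conjTranspose_eq_transpose_of_trivial, hM.eq, trace_mul_comm, Matrix.sub_mul,
      trace_sub, neg_sub]
  simp only [← isMinOn_trace_mul_scaledSpectra_iff hM ht hP, isMinOn_iff, hinner, sub_nonpos]

end FrobeniusProjection

section Eigenvalues

variable {n r : ℕ} {A : Mat n} {μ : ℝ}

theorem lam_sub_eq_eigenvalues_sort (hA : A.IsHermitian) (hr : r < n) :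
    lam A (n - r) = hA.eigenvalues (Tuple.sort hA.eigenvalues ⟨r, hr⟩) := by
  have hrev : Fin.rev ⟨n - r - 1, by omega⟩ = (⟨r, hr⟩ : Fin n) := by
    ext
    simp only [Fin.val_rev]
    omega
  rw [lam, dif_pos (by omega), dif_pos hA, hrev]

theorem lam_sub_le_iff_lt_card (hA : A.IsHermitian) (hr : r < n) (a : ℝ) :
    lam A (n - r) ≤ a ↔ r < Fintype.card {i // hA.eigenvalues i ≤ a} := by
  rw [lam_sub_eq_eigenvalues_sort hA hr, ← Function.comp_apply (f := hA.eigenvalues),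
    ← Tuple.lt_card_le_iff_apply_le_of_monotone (Tuple.monotone_sort hA.eigenvalues),
    ← Fintype.card_subtype]
  have hsort : Fintype.card {i // (hA.eigenvalues ∘ Tuple.sort hA.eigenvalues) i ≤ a} =
      Fintype.card {i // hA.eigenvalues i ≤ a} :=
    Fintype.card_congr
      ((Tuple.sort hA.eigenvalues).subtypeEquiv (q := (hA.eigenvalues · ≤ a)) fun _ => Iff.rfl)
  rw [hsort]

theorem lam_sub_eq_iff_rank_add_lt (hμ : (A - μ • 1).PosSemidef) (hr : r < n) :
    lam A (n - r) = μ ↔ (A - μ • 1).rank + r < n := by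
  have hA : A.IsHermitian := isHermitian_of_posSemidef_sub_smul_one hμ
  have hle := le_eigenvalues_of_posSemidef_sub_smul_one hA hμ
  have hcard : Fintype.card {i // hA.eigenvalues i ≤ μ} + (A - μ • 1).rank = n := by
    simp only [rank_sub_smul_one hA, ne_eq, ← (hle _).ge_iff_eq']
    rw [← Fintype.card_sum, Fintype.card_congr (Equiv.sumCompl _), Fintype.card_fin]
  have hlam : μ ≤ lam A (n - r) := lam_sub_eq_eigenvalues_sort hA hr ▸ hle _
  rw [← hlam.ge_iff_eq', lam_sub_le_iff_lt_card hA hr]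
  omega

end Eigenvalues

section ProjectionRank

variable {n r : ℕ} {X G : Mat n} {s μ η : ℝ}

theorem lt_rank_mproj_scaledSpectra {t : ℝ} (hX : X ∈ scaledSpectra (Fin n) s) (hst : s < t)
    (hμ : (G - μ • 1).PosSemidef) (hrank : (G - μ • 1).rank + r < n) (hη : 0 ≤ η) :
    r < (mproj (scaledSpectra (Fin n) t) (X - η • G)).rank := by
  have : NeZero n := ⟨by omega⟩
  have hs : 0 ≤ s := hX.1 ▸ hX.2.trace_nonneg
  have hG : G.IsHermitian := isHermitian_of_posSemidef_sub_smul_one hμ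
  obtain ⟨hP, ν, hS, hSP⟩ := (mproj_scaledSpectra_eq_iff (hX.2.isHermitian.sub (hG.smul (.all η)))
    (hs.trans_lt hst) (scaledSpectra_nonempty (hs.trans hst.le))).mp rfl
  set P := mproj (scaledSpectra (Fin n) t) (X - η • G)
  by_contra! hPr
  obtain ⟨u, hu, hNu, hPu⟩ : ∃ u ≠ 0, (G - μ • 1) *ᵥ u = 0 ∧ P *ᵥ u = 0 :=
    exists_ne_zero_mulVec_eq_zero_of_rank_add_rank_lt (by rw [Fintype.card_fin]; omega)
  have hdecomp : P - (X - η • G) - ν • 1 = P - X + (η • (G - μ • 1) + (η * μ - ν) • 1) := by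
    module
  rw [hdecomp] at hS hSP
  have hν : 0 ≤ η * μ - ν := by
    have huu : 0 < u ⬝ᵥ u := dotProduct_star_self_pos_iff.mpr hu
    have hSu := hS.dotProduct_mulVec_nonneg u
    have hXu := hX.2.dotProduct_mulVec_nonneg u
    simp only [add_mulVec, sub_mulVec P, smul_mulVec, hNu, hPu, one_mulVec, smul_zero,
      zero_add, zero_sub, dotProduct_add, dotProduct_neg, dotProduct_smul, star_trivial,
      smul_eq_mul] at hSu hXu
    exact nonneg_of_mul_nonneg_left (by linarith) huu
  have htr := trace_le_trace_of_sub_add_mul_eq_zero hP.2.isHermitian hX.2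
    ((hμ.smul hη).add (PosSemidef.one.smul hν)) hSP
  rw [hP.1, hX.1] at htr
  exact htr.not_gt hst

theorem mproj_scaledSpectra_sub_smul_eq_add_smul_kerProj {δ : ℝ}
    (hX : X ∈ scaledSpectra (Fin n) s) (hs : 0 < s) (hμ : (G - μ • 1).PosSemidef)
    (hNX : (G - μ • 1) * X = 0) (hδ : 0 ≤ δ)
    (hgap : (G - μ • 1 - δ • (1 - kerProj (G - μ • 1))).PosSemidef) (hη : 0 ≤ η) :
    mproj (scaledSpectra (Fin n) (s + η * δ * (kerProj (G - μ • 1)).trace)) (X - η • G) =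
      X + (η * δ) • kerProj (G - μ • 1) := by
  have hG : G.IsHermitian := isHermitian_of_posSemidef_sub_smul_one hμ
  set N := G - μ • (1 : Mat n) with hN
  set K := kerProj N
  have hKpsd : K.PosSemidef := posSemidef_kerProj N
  have hNK : N * K = 0 := mul_kerProj hμ.isHermitian
  have hKX : K * X = X := kerProj_mul_eq_self hμ.isHermitian hNX
  have hKK : K * K = K := kerProj_mul_eq_self hμ.isHermitian hNK
  have hPmem : X + (η * δ) • K ∈ scaledSpectra (Fin n) (s + η * δ * K.trace) :=
    ⟨by rw [trace_add, trace_smul, hX.1, smul_eq_mul], hX.2.add (hKpsd.smul (mul_nonneg hη hδ))⟩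
  have hdual : X + (η * δ) • K - (X - η • G) - (η * δ + η * μ) • 1 = η • (N - δ • (1 - K)) := by
    rw [hN]
    module
  have htr : 0 < s + η * δ * K.trace :=
    add_pos_of_pos_of_nonneg hs (mul_nonneg (mul_nonneg hη hδ) hKpsd.trace_nonneg)
  rw [mproj_scaledSpectra_eq_iff (hX.2.isHermitian.sub (hG.smul (.all η))) htr ⟨_, hPmem⟩]
  refine ⟨hPmem, η * δ + η * μ, hdual ▸ hgap.smul hη, ?_⟩
  rw [hdual]
  simp [Matrix.sub_mul, Matrix.mul_add, hNX, hNK, hKX, hKK]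

theorem exists_rank_mproj_scaledSpectra_le (hX : X ∈ scaledSpectra (Fin n) s) (hs : 0 < s)
    (hμ : (G - μ • 1).PosSemidef) (hNX : (G - μ • 1) * X = 0)
    (hrank : n ≤ (G - μ • 1).rank + r) (hη : 0 < η) :
    ∃ ζ : ℝ, 0 < ζ ∧ (mproj (scaledSpectra (Fin n) (s + ζ)) (X - η • G)).rank ≤ r := by
  obtain ⟨δ, hδ, hgap⟩ := exists_pos_posSemidef_sub_smul_one_sub_kerProj hμ
  have hproj :=
    mproj_scaledSpectra_sub_smul_eq_add_smul_kerProj hX hs hμ hNX hδ.le hgap hη.le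
  set N := G - μ • (1 : Mat n)
  set K := kerProj N
  have hKtr : 0 < K.trace := by
    have hK := posSemidef_kerProj N
    refine hK.trace_nonneg.lt_of_ne' fun hK0 => hs.ne' ?_
    rw [← hX.1, ← kerProj_mul_eq_self hμ.isHermitian hNX, hK.trace_eq_zero_iff.mp hK0,
      Matrix.zero_mul, trace_zero]
  refine ⟨η * δ * K.trace, by positivity, ?_⟩
  have hNP : N * (X + (η * δ) • K) = 0 := by
    rw [Matrix.mul_add, Matrix.mul_smul, hNX, mul_kerProj hμ.isHermitian, smul_zero, add_zero]
  have hcard := rank_add_rank_le_card_of_mul_eq_zero hNP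
  rw [Fintype.card_fin] at hcard
  rw [hproj]
  omega

end ProjectionRank

theorem stmt_2_general {n r : ℕ} (hr : r < n) {X G : Mat n} (hX : X ∈ Spectra n)
    (hG : G.IsSymm) (hfo : ∀ Z ∈ Spectra n, mip (Z - X) G ≥ 0) {η : ℝ} (hη : 0 < η) :
    lam G (n - r) = lam G n ↔
      ∀ ζ : ℝ, 0 < ζ →
        r < (mproj {Z : Mat n | Z.trace = 1 + ζ ∧ Z.PosSemidef} (X - η • G)).rank := by
  have hG' : G.IsHermitian := by rwa [isHermitian_iff_isSymm]
  have hX1 : X ∈ scaledSpectra (Fin n) 1 := hX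
  have hmin : IsMinOn (fun Z => (Z * G).trace) (scaledSpectra (Fin n) 1) X := fun Z hZ => by
    have h := hfo Z hZ
    rwa [mip, Matrix.sub_mul, trace_sub, ge_iff_le, sub_nonneg] at h
  obtain ⟨μ, hμ, hNX⟩ := (isMinOn_trace_mul_scaledSpectra_iff hG' one_pos hX1).mp hmin
  have hX0 : X ≠ 0 := fun h => by simpa [h] using hX.1
  have hNrank : (G - μ • 1).rank < n := by simpa using rank_lt_card_of_mul_eq_zero hNX hX0
  have hlam : lam G n = μ := (lam_sub_eq_iff_rank_add_lt (r := 0) hμ (by omega)).mpr hNrank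
  rw [hlam, lam_sub_eq_iff_rank_add_lt hμ hr]
  refine ⟨fun hrank ζ hζ => lt_rank_mproj_scaledSpectra hX1 (by linarith) hμ hrank hη.le,
    fun hall => ?_⟩
  by_contra! hrank
  obtain ⟨ζ, hζ, hle⟩ := exists_rank_mproj_scaledSpectra_le hX1 one_pos hμ hNX hrank hη
  exact (hall ζ hζ).not_ge hle

theorem stmt_2 {n : ℕ} (hn : 2 ≤ n) (g : Mat n → ℝ)
    (hg : ConvexOn ℝ (SymM n) g)
    (Xs : Mat n) (hXsS : Xs ∈ Spectra n)
    (hmin : ∀ X ∈ Spectra n, g Xs ≤ g X)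
    (rs : ℕ) (hrank : Xs.rank = rs) (hrsn : rs < n)
    (G : Mat n) (hG : G ∈ subdiff g Xs)
    (hfo : ∀ X ∈ Spectra n, mip (X - Xs) G ≥ 0)
    (η : ℝ) (hη : 0 < η) :
    lam G (n - rs) = lam G n ↔
      ∀ ζ : ℝ, 0 < ζ →
        rs < (mproj {X : Mat n | X.trace = 1 + ζ ∧ X.PosSemidef} (Xs - η • G)).rank :=
  stmt_2_general hrsn hXsS hG.1 hfo hη
end
end
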